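/- (Ergodic convergence rate of the relaxed PR splitting method.) Let 𝒳 be a finite-dimensional real inner product space, β ≥ 0, A, B : 𝒳 ⇉ 𝒳 maximal β-strongly monotone with (A+B)⁻¹(0) ≠ ∅, γ > 0, θ₀ := 1 + γβ/2, θ̃ := min{θ, θ₀}, and assume θ ∈ (0, 2θ₀]. Let {(u_k, v_k, x_k)} be generated by the relaxed PR splitting method from x₀, set a_k := (x_{k−1} − u_k)/γ, b_k := (2u_k − v_k − x_{k−1})/γ, and define the ergodic means ū_k := (1/k)Σ_{i=1}^{k} u_i, v̄_k := (1/k)Σ_{i=1}^{k} v_i, ā_k := (1/k)Σ_{i=1}^{k} a_i, b̄_k := (1/k)Σ_{i=1}^{k} b_i, ε′_k := (1/k)Σ_{i=1}^{k} ⟨a_i − βu_i, u_i − ū_k⟩, ε″_k := (1/k)Σ_{i=1}^{k} ⟨b_i − βv_i, v_i − v̄_k⟩. Then for every k ≥ 1 and every z* = (u*, u*, x*) ∈ (ℒ_{θ̃} + γC)⁻¹(0): ā_k ∈ A^[ε′_k](ū_k), b̄_k ∈ B^[ε″_k](v̄_k), γ‖ā_k + b̄_k‖ = ‖ū_k − v̄_k‖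 ≤ 2‖x₀ − x*‖/(kθ), and ε′_k + ε″_k ≤ 3(1 + 2(1 − θ̃/θ)²)‖x₀ − x*‖²/(kγθ). -/

import Mathlib

open RealInnerProductSpace Filter Pointwise

/-- The inner product on the triple product space `𝒵 = 𝒳 × 𝒳 × 𝒳`. -/
noncomputable def inner3 {X : Type*} [NormedAddCommGroup X] [InnerProductSpace ℝ X]
    (z z' : X × X × X) : ℝ :=
  ⟪z.1, z'.1⟫ + ⟪z.2.1, z'.2.1⟫ + ⟪z.2.2, z'.2.2⟫

/-- The linear map `ℒ_θ̃(u,v,x) := ((1−θ̃)u + θ̃v − x, (θ̃−2)u + (1−θ̃)v + x, u − v)`. -/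
def Lmap {X : Type*} [NormedAddCommGroup X] [InnerProductSpace ℝ X]
    (θ : ℝ) (z : X × X × X) : X × X × X :=
  ((1 - θ) • z.1 + θ • z.2.1 - z.2.2,
    (θ - 2) • z.1 + (1 - θ) • z.2.1 + z.2.2,
    z.1 - z.2.1)

/-- The operator `(ℒ_θ̃ + γC)(u,v,x)` where `C(u,v,x) := A(u) × B(v) × {0}`. -/
def LC {X : Type*} [NormedAddCommGroup X] [InnerProductSpace ℝ X]
    (θ γ : ℝ) (A B : X → Set X) (z : X × X × X) : Set (X × X × X) :=
  {rr | ∃ a ∈ A z.1, ∃ b ∈ B z.2.1, rr = Lmap θ z + γ • ((a, b, (0 : X)) : X × X × X)}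

/-- `T : 𝒳 ⇉ 𝒳` is β-strongly monotone (β = 0 meaning just monotone). -/
def StrMono {X : Type*} [NormedAddCommGroup X] [InnerProductSpace ℝ X]
    (β : ℝ) (T : X → Set X) : Prop :=
  ∀ x x' w w' : X, w ∈ T x → w' ∈ T x' → β * ‖x - x'‖ ^ 2 ≤ ⟪w - w', x - x'⟫

/-- `T : 𝒳 ⇉ 𝒳` is maximal β-strongly monotone: it is β-strongly monotone and its graph
is not properly contained in the graph of another monotone operator. -/
def MaxStrMono {X : Type*} [NormedAddCommGroup X] [InnerProductSpace ℝ X]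
    (β : ℝ) (T : X → Set X) : Prop :=
  StrMono β T ∧ ∀ T' : X → Set X, StrMono 0 T' → (∀ x, T x ⊆ T' x) → T' = T

/-- Monotonicity of an operator on the triple product space `𝒵 = 𝒳³`. -/
def Mono3 {X : Type*} [NormedAddCommGroup X] [InnerProductSpace ℝ X]
    (T : (X × X × X) → Set (X × X × X)) : Prop :=
  ∀ z z' t t', t ∈ T z → t' ∈ T z' → 0 ≤ inner3 (z - z') (t - t')

/-- Maximal monotonicity of an operator on the triple product space `𝒵 = 𝒳³`. -/
def MaxMono3 {X : Type*} [NormedAddCommGroup X] [InnerProductSpace ℝ X]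
    (T : (X × X × X) → Set (X × X × X)) : Prop :=
  Mono3 T ∧ ∀ T', Mono3 T' → (∀ z, T z ⊆ T' z) → T' = T

/-- The ε-enlargement `T^[ε]` of an operator on `𝒳`. -/
def epsEnlX {X : Type*} [NormedAddCommGroup X] [InnerProductSpace ℝ X]
    (T : X → Set X) (ε : ℝ) (z : X) : Set X :=
  {t | ∀ z' t' : X, t' ∈ T z' → -ε ≤ ⟪t - t', z - z'⟫}

/-- The relaxed Peaceman–Rachford splitting method with relaxation parameter `θ` and
scaling `γ`: for `k ≥ 1`, `u_k = J_{γA}(x_{k−1})`, `v_k = J_{γB}(2u_k − x_{k−1})`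
(expressed through resolvent inclusions) and `x_k = x_{k−1} + θ(v_k − u_k)`. -/
structure RPR {X : Type*} [NormedAddCommGroup X] [InnerProductSpace ℝ X]
    (A B : X → Set X) (γ θ : ℝ) (x u v : ℕ → X) : Prop where
  resA : ∀ k, 1 ≤ k → x (k - 1) - u k ∈ γ • A (u k)
  resB : ∀ k, 1 ≤ k → (2 : ℝ) • u k - x (k - 1) - v k ∈ γ • B (v k)
  step : ∀ k, 1 ≤ k → x k = x (k - 1) + θ • (v k - u k)

/-! One iteration, with iterates `x, u, v, x⁺` and operator values `a, b`, is a linear relation and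
satisfies `2θγ (⟪a - βu, u⟫ + ⟪b - βv, v⟫) ≤ ‖x‖² - ‖x⁺‖²` as soon as `θ ≤ 2 + γβ`; by linearity the
same holds for differences of iterations. Subtracting the constant iteration at `x*` makes the
left-hand side nonnegative, so `‖x_k - x*‖` decreases and `kθ (ū_k - v̄_k) = x_0 - x_k` is at most
`2 ‖x_0 - x*‖` in norm. Subtracting instead the iteration that sends `x*` to `x* + θ (v̄_k - ū_k)`
through `(ū_k, v̄_k)` and summing, the left-hand sides add up to `2θγk (ε′_k + ε″_k)`. By
Cauchy-Schwarz the right-hand sides are at most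
`‖x_{i-1} - x*‖² - ‖x_i - x*‖² + 2θ ‖x_i - x*‖ ‖ū_k - v̄_k‖`, and these sum to at most
`4 ‖x_0 - x*‖²`. -/

theorem sum_Icc_one_sub {G : Type*} [AddCommGroup G] (f : ℕ → G) (n : ℕ) :
    ∑ i ∈ Finset.Icc 1 n, (f (i - 1) - f i) = f 0 - f n := by
  induction n with
  | zero => simp
  | succ n ih => rw [Finset.sum_Icc_succ_top (by omega), ih, Nat.add_sub_cancel]; abel

section InnerProduct

variable {X : Type*} [NormedAddCommGroup X] [InnerProductSpace ℝ X]

theorem sum_inner_sub_left_of_sum_eq_zero {ι : Type*} {s : Finset ι} (c : ι → X) {y : ι → X}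
    (hy : ∑ i ∈ s, y i = 0) (e : X) :
    ∑ i ∈ s, ⟪c i - e, y i⟫ = ∑ i ∈ s, ⟪c i, y i⟫ := by
  simp only [inner_sub_left, Finset.sum_sub_distrib, ← inner_sum, hy, inner_zero_right, sub_zero]

/-- The ergodic mean `(1/k) ∑_{i=1}^k f_i` of a sequence; it is `0` for `k = 0`. -/
noncomputable def ergodicMean (f : ℕ → X) (k : ℕ) : X :=
  (k : ℝ)⁻¹ • ∑ i ∈ Finset.Icc 1 k, f i

/-- The ergodic residual `(1/k) ∑_{i=1}^k ⟪a_i - β u_i, u_i - ū_k⟫`, the `ε` for which the ergodic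
mean of `a` lies in the `ε`-enlargement at the ergodic mean of `u`; the paper's `ε′_k`, `ε″_k`. -/
noncomputable def ergodicResidual (β : ℝ) (a u : ℕ → X) (k : ℕ) : ℝ :=
  (k : ℝ)⁻¹ * ∑ i ∈ Finset.Icc 1 k, ⟪a i - β • u i, u i - ergodicMean u k⟫

variable {k : ℕ}

theorem natCast_smul_ergodicMean (f : ℕ → X) (hk : k ≠ 0) :
    (k : ℝ) • ergodicMean f k = ∑ i ∈ Finset.Icc 1 k, f i :=
  smul_inv_smul₀ (Nat.cast_ne_zero.2 hk) _

theorem natCast_mul_ergodicResidual (β : ℝ) (a u : ℕ → X) (hk : k ≠ 0) :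
    k * ergodicResidual β a u k
      = ∑ i ∈ Finset.Icc 1 k, ⟪a i - β • u i, u i - ergodicMean u k⟫ :=
  mul_inv_cancel_left₀ (Nat.cast_ne_zero.2 hk) _

theorem sum_sub_ergodicMean (f : ℕ → X) (hk : k ≠ 0) :
    ∑ i ∈ Finset.Icc 1 k, (f i - ergodicMean f k) = 0 := by
  rw [Finset.sum_sub_distrib, ← natCast_smul_ergodicMean f hk, Finset.sum_const, Nat.card_Icc,
    Nat.add_sub_cancel, Nat.cast_smul_eq_nsmul, sub_self]

theorem natCast_mul_ergodicResidual_eq_sum_inner_sub (β : ℝ) (a u : ℕ → X) (hk : k ≠ 0) (e : X) :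
    k * ergodicResidual β a u k = ∑ i ∈ Finset.Icc 1 k,
      ⟪a i - e - β • (u i - ergodicMean u k), u i - ergodicMean u k⟫ := by
  rw [natCast_mul_ergodicResidual β a u hk, ← sum_inner_sub_left_of_sum_eq_zero _
    (sum_sub_ergodicMean u hk) (e - β • ergodicMean u k)]
  refine Finset.sum_congr rfl fun i _ ↦ ?_
  congr 1
  module

end InnerProduct

section StronglyMonotone

variable {X : Type*} [NormedAddCommGroup X] [InnerProductSpace ℝ X] {T : X → Set X} {β : ℝ}

theorem StrMono.inner_sub_smul_nonneg (hT : StrMono β T) {z z' t t' : X} (ht : t ∈ T z)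
    (ht' : t' ∈ T z') : 0 ≤ ⟪t - t' - β • (z - z'), z - z'⟫ := by
  rw [inner_sub_left, real_inner_smul_left, real_inner_self_eq_norm_sq]
  exact sub_nonneg.2 (hT _ _ _ _ ht ht')

theorem StrMono.sum_smul_mem_epsEnlX (hT : StrMono β T) (hβ : 0 ≤ β) {ι : Type*} {s : Finset ι}
    {w : ι → ℝ} (hw : ∀ i ∈ s, 0 ≤ w i) (hw1 : ∑ i ∈ s, w i = 1) {a u : ι → X}
    (ha : ∀ i ∈ s, a i ∈ T (u i)) :
    ∑ i ∈ s, w i • a i ∈ epsEnlX T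
      (∑ i ∈ s, w i * ⟪a i - β • u i, u i - ∑ j ∈ s, w j • u j⟫) (∑ i ∈ s, w i • u i) := by
  intro z t ht
  set m := ∑ i ∈ s, w i • u i with hm
  have hterm (i : ι) : w i * ⟪a i - t - β • (u i - z), u i - z⟫
      = w i * ⟪a i - β • u i, u i - m⟫ + ⟪w i • a i - β • w i • u i, m - z⟫
        - ⟪t - β • z, w i • u i - w i • z⟫ := by
    simp only [inner_sub_left, inner_sub_right, real_inner_smul_left, real_inner_smul_right]
    ring
  have hsum : 0 ≤ ∑ i ∈ s, w i * ⟪a i - β • u i, u i - m⟫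
      + ⟪∑ i ∈ s, w i • a i - β • m, m - z⟫ - ⟪t - β • z, m - z⟫ := by
    calc 0 ≤ ∑ i ∈ s, w i * ⟪a i - t - β • (u i - z), u i - z⟫ :=
          Finset.sum_nonneg fun i hi ↦
            mul_nonneg (hw i hi) (hT.inner_sub_smul_nonneg (ha i hi) ht)
      _ = _ := by
          simp only [hterm, Finset.sum_sub_distrib, Finset.sum_add_distrib, ← sum_inner,
            ← inner_sum, ← Finset.smul_sum, ← Finset.sum_smul, hw1, one_smul, ← hm]
  have hsq : 0 ≤ β * ⟪m - z, m - z⟫ := mul_nonneg hβ real_inner_self_nonneg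
  simp only [inner_sub_left, real_inner_smul_left] at hsum hsq ⊢
  linarith

theorem StrMono.ergodicMean_mem_epsEnlX (hT : StrMono β T) (hβ : 0 ≤ β) {a u : ℕ → X}
    (ha : ∀ i, 1 ≤ i → a i ∈ T (u i)) {k : ℕ} (hk : k ≠ 0) :
    ergodicMean a k ∈ epsEnlX T (ergodicResidual β a u k) (ergodicMean u k) := by
  have h := hT.sum_smul_mem_epsEnlX hβ (s := Finset.Icc 1 k) (w := fun _ ↦ (k : ℝ)⁻¹)
    (fun _ _ ↦ by positivity) (by simp [hk]) fun i hi ↦ ha i (Finset.mem_Icc.1 hi).1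
  simp only [← Finset.smul_sum, ← Finset.mul_sum] at h
  exact h

end StronglyMonotone

/-- One iteration `x ↦ x'` of the relaxed Peaceman–Rachford method, kept only as the linear
relations between the iterates `u, v` and the operator values `a, b` found at them. -/
structure RPRStep {X : Type*} [NormedAddCommGroup X] [InnerProductSpace ℝ X]
    (γ θ : ℝ) (x u v a b x' : X) : Prop where
  smul_left : γ • a = x - u
  smul_right : γ • b = (2 : ℝ) • u - v - x
  next : x' = x + θ • (v - u)

namespace RPRStep

variable {X : Type*} [NormedAddCommGroup X] [InnerProductSpace ℝ X]
  {γ θ β : ℝ} {x u v a b x' y p q c d y' : X}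

theorem of_ne_zero (hγ : γ ≠ 0) (θ : ℝ) (x u v : X) :
    RPRStep γ θ x u v (γ⁻¹ • (x - u)) (γ⁻¹ • ((2 : ℝ) • u - v - x)) (x + θ • (v - u)) :=
  ⟨smul_inv_smul₀ hγ _, smul_inv_smul₀ hγ _, rfl⟩

theorem sub (h : RPRStep γ θ x u v a b x') (h' : RPRStep γ θ y p q c d y') :
    RPRStep γ θ (x - y) (u - p) (v - q) (a - c) (b - d) (x' - y') where
  smul_left := by rw [smul_sub, h.smul_left, h'.smul_left]; module
  smul_right := by rw [smul_sub, h.smul_right, h'.smul_right]; module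
  next := by rw [h.next, h'.next]; module

theorem smul_add_eq (h : RPRStep γ θ x u v a b x') : γ • (a + b) = u - v := by
  rw [smul_add, h.smul_left, h.smul_right]; module

theorem smul_sub_eq (h : RPRStep γ θ x u v a b x') : θ • (u - v) = x - x' := by
  rw [h.next]; module

theorem norm_sq_sub_norm_sq (h : RPRStep γ θ x u v a b x') :
    ‖x‖ ^ 2 - ‖x'‖ ^ 2 = θ * (2 * ⟪x, u - v⟫ - θ * ‖u - v‖ ^ 2) := by
  have hx' : x' = x - θ • (u - v) := by rw [h.next]; module
  rw [hx', norm_sub_sq_real, real_inner_smul_right, norm_smul, mul_pow, Real.norm_eq_abs, sq_abs]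
  ring

theorem mul_inner_add_inner (h : RPRStep γ θ x u v a b x') (β : ℝ) :
    γ * (⟪a - β • u, u⟫ + ⟪b - β • v, v⟫)
      = ⟪x, u - v⟫ - ‖u - v‖ ^ 2 - γ * β * (‖u‖ ^ 2 + ‖v‖ ^ 2) := by
  have ha : γ * ⟪a, u⟫ = ⟪x - u, u⟫ := by rw [← h.smul_left, real_inner_smul_left]
  have hb : γ * ⟪b, v⟫ = ⟪(2 : ℝ) • u - v - x, v⟫ := by rw [← h.smul_right, real_inner_smul_left]
  simp only [inner_sub_left, inner_sub_right, real_inner_smul_left, real_inner_self_eq_norm_sq,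
    norm_sub_sq_real] at ha hb ⊢
  linarith

theorem mul_inner_add_inner_le (h : RPRStep γ θ x u v a b x') (hγβ : 0 ≤ γ * β) (hθ : 0 ≤ θ)
    (hle : θ ≤ 2 + γ * β) :
    2 * θ * γ * (⟪a - β • u, u⟫ + ⟪b - β • v, v⟫) ≤ ‖x‖ ^ 2 - ‖x'‖ ^ 2 := by
  have hpar : γ * β * ‖u - v‖ ^ 2 ≤ γ * β * (2 * (‖u‖ ^ 2 + ‖v‖ ^ 2)) := by
    gcongr
    nlinarith [parallelogram_law_with_norm ℝ u v, sq_nonneg ‖u + v‖]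
  have hrelax : θ * ‖u - v‖ ^ 2 ≤ (2 + γ * β) * ‖u - v‖ ^ 2 := by gcongr
  calc 2 * θ * γ * (⟪a - β • u, u⟫ + ⟪b - β • v, v⟫)
      = θ * (2 * (γ * (⟪a - β • u, u⟫ + ⟪b - β • v, v⟫))) := by ring
    _ ≤ θ * (2 * ⟪x, u - v⟫ - θ * ‖u - v‖ ^ 2) := by
        rw [h.mul_inner_add_inner]
        gcongr
        linarith
    _ = ‖x‖ ^ 2 - ‖x'‖ ^ 2 := h.norm_sq_sub_norm_sq.symm

theorem norm_next_sub_le {A B : X → Set X} (h : RPRStep γ θ x u v a b x')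
    (h' : RPRStep γ θ y p q c d y) (hA : StrMono β A) (hB : StrMono β B) (ha : a ∈ A u)
    (hb : b ∈ B v) (hc : c ∈ A p) (hd : d ∈ B q) (hγ : 0 ≤ γ) (hβ : 0 ≤ β) (hθ : 0 ≤ θ)
    (hle : θ ≤ 2 + γ * β) : ‖x' - y‖ ≤ ‖x - y‖ := by
  refine le_of_sq_le_sq ?_ (norm_nonneg _)
  refine sub_nonneg.1 (le_trans ?_ ((h.sub h').mul_inner_add_inner_le (by positivity) hθ hle))
  exact mul_nonneg (by positivity)
    (add_nonneg (hA.inner_sub_smul_nonneg ha hc) (hB.inner_sub_smul_nonneg hb hd))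

theorem mul_inner_sub_add_inner_sub_le (h : RPRStep γ θ x u v a b x')
    (h' : RPRStep γ θ y p q c d y') (hγβ : 0 ≤ γ * β) (hθ : 0 ≤ θ) (hle : θ ≤ 2 + γ * β) :
    2 * θ * γ * (⟪a - c - β • (u - p), u - p⟫ + ⟪b - d - β • (v - q), v - q⟫)
      ≤ ‖x - y‖ ^ 2 - ‖x' - y‖ ^ 2 + 2 * ‖x' - y‖ * ‖y - y'‖ := by
  have hnorm : ‖x' - y‖ ^ 2 - 2 * ‖x' - y‖ * ‖y - y'‖ ≤ ‖x' - y'‖ ^ 2 := by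
    rw [← sub_add_sub_cancel x' y y', norm_add_sq_real]
    nlinarith [neg_le_of_abs_le (abs_real_inner_le_norm (x' - y) (y - y')), sq_nonneg ‖y - y'‖]
  linarith [(h.sub h').mul_inner_add_inner_le hγβ hθ hle]

end RPRStep

/-- A run of the relaxed Peaceman–Rachford method without reference to the operators; as in the
paper, iteration `i ≥ 1` goes from `x (i - 1)` to `x i`. -/
def RPRTrajectory {X : Type*} [NormedAddCommGroup X] [InnerProductSpace ℝ X]
    (γ θ : ℝ) (x u v a b : ℕ → X) : Prop :=
  ∀ i, 1 ≤ i → RPRStep γ θ (x (i - 1)) (u i) (v i) (a i) (b i) (x i)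

namespace RPRTrajectory

variable {X : Type*} [NormedAddCommGroup X] [InnerProductSpace ℝ X]
  {A B : X → Set X} {γ θ β : ℝ} {x u v a b : ℕ → X} {k : ℕ}

theorem antitone_norm_sub (h : RPRTrajectory γ θ x u v a b) (hA : StrMono β A) (hB : StrMono β B)
    (ha : ∀ i, 1 ≤ i → a i ∈ A (u i)) (hb : ∀ i, 1 ≤ i → b i ∈ B (v i)) (hγ : 0 ≤ γ) (hβ : 0 ≤ β)
    (hθ : 0 ≤ θ) (hle : θ ≤ 2 + γ * β) {p q c d y : X} (hc : c ∈ A p) (hd : d ∈ B q)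
    (hy : RPRStep γ θ y p q c d y) : Antitone fun i ↦ ‖x i - y‖ :=
  antitone_nat_of_succ_le fun i ↦ (h (i + 1) i.succ_pos).norm_next_sub_le hy hA hB
    (ha _ i.succ_pos) (hb _ i.succ_pos) hc hd hγ hβ hθ hle

theorem smul_ergodicMean_add (h : RPRTrajectory γ θ x u v a b) (k : ℕ) :
    γ • (ergodicMean a k + ergodicMean b k) = ergodicMean u k - ergodicMean v k := by
  simp only [ergodicMean]
  rw [← smul_add, ← smul_sub, ← Finset.sum_add_distrib, ← Finset.sum_sub_distrib, smul_comm,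
    Finset.smul_sum]
  exact congrArg _ (Finset.sum_congr rfl fun i hi ↦ (h i (Finset.mem_Icc.1 hi).1).smul_add_eq)

theorem smul_ergodicMean_sub (h : RPRTrajectory γ θ x u v a b) (hk : k ≠ 0) :
    (k * θ) • (ergodicMean u k - ergodicMean v k) = x 0 - x k := by
  rw [mul_comm, mul_smul, smul_sub (k : ℝ), natCast_smul_ergodicMean u hk,
    natCast_smul_ergodicMean v hk, ← Finset.sum_sub_distrib, Finset.smul_sum,
    ← sum_Icc_one_sub x]
  exact Finset.sum_congr rfl fun i hi ↦ (h i (Finset.mem_Icc.1 hi).1).smul_sub_eq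

theorem mul_norm_ergodicMean_sub_le (h : RPRTrajectory γ θ x u v a b) (hk : k ≠ 0) (hθ : 0 ≤ θ)
    (y : X) :
    k * θ * ‖ergodicMean u k - ergodicMean v k‖ ≤ ‖x 0 - y‖ + ‖x k - y‖ := by
  calc k * θ * ‖ergodicMean u k - ergodicMean v k‖
      = ‖(x 0 - y) - (x k - y)‖ := by
        rw [sub_sub_sub_cancel_right, ← h.smul_ergodicMean_sub hk, norm_smul,
          Real.norm_of_nonneg (by positivity)]
    _ ≤ ‖x 0 - y‖ + ‖x k - y‖ := norm_sub_le _ _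

theorem mul_ergodicResidual_add_le (h : RPRTrajectory γ θ x u v a b) (hk : k ≠ 0) (hγ : γ ≠ 0)
    (hγβ : 0 ≤ γ * β) (hθ : 0 ≤ θ) (hle : θ ≤ 2 + γ * β) {y : X} {R : ℝ}
    (hR : ∀ i, ‖x i - y‖ ≤ R) :
    2 * θ * γ * (k * (ergodicResidual β a u k + ergodicResidual β b v k))
      ≤ ‖x 0 - y‖ ^ 2 - ‖x k - y‖ ^ 2
        + 2 * R * (k * θ * ‖ergodicMean u k - ergodicMean v k‖) := by
  set p := ergodicMean u k
  set q := ergodicMean v k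
  set c := γ⁻¹ • (y - p)
  set d := γ⁻¹ • ((2 : ℝ) • p - q - y)
  have href : RPRStep γ θ y p q c d (y + θ • (q - p)) := .of_ne_zero hγ θ y p q
  have hmove : ‖y - (y + θ • (q - p))‖ = θ * ‖p - q‖ := by
    rw [← href.smul_sub_eq, norm_smul, Real.norm_of_nonneg hθ]
  have hterm (i : ℕ) (hi : i ∈ Finset.Icc 1 k) :
      2 * θ * γ * (⟪a i - c - β • (u i - p), u i - p⟫ + ⟪b i - d - β • (v i - q), v i - q⟫)
        ≤ (‖x (i - 1) - y‖ ^ 2 - ‖x i - y‖ ^ 2) + 2 * R * (θ * ‖p - q‖) := by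
    refine ((h i (Finset.mem_Icc.1 hi).1).mul_inner_sub_add_inner_sub_le
      href hγβ hθ hle).trans ?_
    rw [hmove]
    gcongr
    exact hR i
  rw [mul_add, natCast_mul_ergodicResidual_eq_sum_inner_sub β a u hk c,
    natCast_mul_ergodicResidual_eq_sum_inner_sub β b v hk d,
    ← Finset.sum_add_distrib, Finset.mul_sum]
  refine (Finset.sum_le_sum hterm).trans_eq ?_
  rw [Finset.sum_add_distrib, sum_Icc_one_sub fun i ↦ ‖x i - y‖ ^ 2, Finset.sum_const,
    Nat.card_Icc, Nat.add_sub_cancel, nsmul_eq_mul]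
  ring

theorem mul_ergodicResidual_add_le_of_antitone (h : RPRTrajectory γ θ x u v a b) (hk : k ≠ 0)
    (hγ : γ ≠ 0) (hγβ : 0 ≤ γ * β) (hθ : 0 ≤ θ) (hle : θ ≤ 2 + γ * β) {y : X}
    (hy : Antitone fun i ↦ ‖x i - y‖) :
    θ * γ * (k * (ergodicResidual β a u k + ergodicResidual β b v k)) ≤ 2 * ‖x 0 - y‖ ^ 2 := by
  have hsum := h.mul_ergodicResidual_add_le hk hγ hγβ hθ hle fun i ↦ hy (Nat.zero_le i)
  have hmean := mul_le_mul_of_nonneg_left (h.mul_norm_ergodicMean_sub_le hk hθ y)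
    (norm_nonneg (x 0 - y))
  linarith [sq_nonneg (‖x 0 - y‖ - ‖x k - y‖)]

end RPRTrajectory

section Inclusion

variable {X : Type*} [NormedAddCommGroup X] [InnerProductSpace ℝ X]
  {A B : X → Set X} {γ θ : ℝ} {x u v a b : ℕ → X}

theorem RPR.rprTrajectory (h : RPR A B γ θ x u v) (hγ : γ ≠ 0)
    (ha : ∀ i, a i = γ⁻¹ • (x (i - 1) - u i))
    (hb : ∀ i, b i = γ⁻¹ • ((2 : ℝ) • u i - v i - x (i - 1))) : RPRTrajectory γ θ x u v a b := by
  intro i hi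
  rw [ha, hb, h.step i hi]
  exact .of_ne_zero hγ θ _ _ _

theorem rprStep_of_zero_mem_LC {σ : ℝ} {p y : X} (h : (0 : X × X × X) ∈ LC σ γ A B (p, p, y)) :
    ∃ c ∈ A p, ∃ d ∈ B p, RPRStep γ θ y p p c d y := by
  obtain ⟨c, hc, d, hd, h0⟩ := h
  simp only [Lmap, Prod.ext_iff, Prod.fst_add, Prod.snd_add, Prod.smul_fst, Prod.smul_snd,
    Prod.fst_zero, Prod.snd_zero] at h0
  obtain ⟨hleft, hright, -⟩ := h0
  refine ⟨c, hc, d, hd, ?_, ?_, by simp⟩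
  · rw [← sub_eq_zero, hleft]; module
  · rw [← sub_eq_zero, hright]; module

end Inclusion

theorem stmt18_general {X : Type*} [NormedAddCommGroup X] [InnerProductSpace ℝ X]
    {β γ θ σ : ℝ} {A B : X → Set X} {x u v a b : ℕ → X} {k : ℕ} {ustar xstar : X}
    (hβ : 0 ≤ β) (hA : StrMono β A) (hB : StrMono β B) (hγ : 0 < γ) (hθ : 0 < θ)
    (hle : θ ≤ 2 + γ * β) (hpr : RPR A B γ θ x u v)
    (ha : ∀ i, a i = γ⁻¹ • (x (i - 1) - u i))
    (hb : ∀ i, b i = γ⁻¹ • ((2 : ℝ) • u i - v i - x (i - 1))) (hk : 1 ≤ k)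
    (hstar : (0 : X × X × X) ∈ LC σ γ A B (ustar, ustar, xstar)) :
    ergodicMean a k ∈ epsEnlX A (ergodicResidual β a u k) (ergodicMean u k)
      ∧ ergodicMean b k ∈ epsEnlX B (ergodicResidual β b v k) (ergodicMean v k)
      ∧ γ * ‖ergodicMean a k + ergodicMean b k‖ = ‖ergodicMean u k - ergodicMean v k‖
      ∧ ‖ergodicMean u k - ergodicMean v k‖ ≤ 2 * ‖x 0 - xstar‖ / (k * θ)
      ∧ ergodicResidual β a u k + ergodicResidual β b v k
          ≤ 2 * ‖x 0 - xstar‖ ^ 2 / (k * γ * θ) := by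
  have hk0 : k ≠ 0 := Nat.one_le_iff_ne_zero.1 hk
  have hkpos : (0 : ℝ) < k := Nat.cast_pos.2 hk
  have hγβ : 0 ≤ γ * β := mul_nonneg hγ.le hβ
  have haA (i : ℕ) (hi : 1 ≤ i) : a i ∈ A (u i) := by
    simpa only [ha, Set.mem_smul_set_iff_inv_smul_mem₀ hγ.ne'] using hpr.resA i hi
  have hbB (i : ℕ) (hi : 1 ≤ i) : b i ∈ B (v i) := by
    simpa only [hb, sub_right_comm, Set.mem_smul_set_iff_inv_smul_mem₀ hγ.ne'] using hpr.resB i hi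
  have htraj := hpr.rprTrajectory hγ.ne' ha hb
  obtain ⟨c, hc, d, hd, hfix⟩ := rprStep_of_zero_mem_LC (θ := θ) hstar
  have hfejer := htraj.antitone_norm_sub hA hB haA hbB hγ.le hβ hθ.le hle hc hd hfix
  refine ⟨hA.ergodicMean_mem_epsEnlX hβ haA hk0, hB.ergodicMean_mem_epsEnlX hβ hbB hk0, ?_, ?_, ?_⟩
  · rw [← htraj.smul_ergodicMean_add, norm_smul, Real.norm_of_nonneg hγ.le]
  · rw [le_div_iff₀ (mul_pos hkpos hθ)]
    linarith [htraj.mul_norm_ergodicMean_sub_le hk0 hθ.le xstar, hfejer (Nat.zero_le k)]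
  · rw [le_div_iff₀ (mul_pos (mul_pos hkpos hγ) hθ)]
    linarith [htraj.mul_ergodicResidual_add_le_of_antitone hk0 hγ.ne' hγβ hθ.le hle hfejer]

/-- Ergodic convergence rate of the relaxed PR splitting method for
`θ ∈ (0, 2θ₀]`. -/
theorem stmt18 {X : Type*} [NormedAddCommGroup X] [InnerProductSpace ℝ X]
    [FiniteDimensional ℝ X]
    (β : ℝ) (hβ : 0 ≤ β) (A B : X → Set X)
    (hA : MaxStrMono β A) (hB : MaxStrMono β B)
    (hsol : ∃ u : X, ∃ a ∈ A u, ∃ b ∈ B u, a + b = 0)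
    (γ θ θ0 θt : ℝ) (hγ : 0 < γ) (hθ0 : θ0 = 1 + γ * β / 2) (hθt : θt = min θ θ0)
    (hθpos : 0 < θ) (hθle : θ ≤ 2 * θ0)
    (x u v : ℕ → X) (hpr : RPR A B γ θ x u v)
    (a b : ℕ → X)
    (ha : ∀ k, a k = γ⁻¹ • (x (k - 1) - u k))
    (hb : ∀ k, b k = γ⁻¹ • ((2 : ℝ) • u k - v k - x (k - 1)))
    (ub vb ab bb : ℕ → X) (ε1 ε2 : ℕ → ℝ)
    (hub : ∀ k, ub k = (k : ℝ)⁻¹ • ∑ i ∈ Finset.Icc 1 k, u i)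
    (hvb : ∀ k, vb k = (k : ℝ)⁻¹ • ∑ i ∈ Finset.Icc 1 k, v i)
    (hab : ∀ k, ab k = (k : ℝ)⁻¹ • ∑ i ∈ Finset.Icc 1 k, a i)
    (hbb : ∀ k, bb k = (k : ℝ)⁻¹ • ∑ i ∈ Finset.Icc 1 k, b i)
    (hε1 : ∀ k, ε1 k = (k : ℝ)⁻¹ * ∑ i ∈ Finset.Icc 1 k, ⟪a i - β • u i, u i - ub k⟫)
    (hε2 : ∀ k, ε2 k = (k : ℝ)⁻¹ * ∑ i ∈ Finset.Icc 1 k, ⟪b i - β • v i, v i - vb k⟫) :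
    ∀ k, 1 ≤ k → ∀ ustar xstar : X,
      (0 : X × X × X) ∈ LC θt γ A B (ustar, ustar, xstar) →
        ab k ∈ epsEnlX A (ε1 k) (ub k)
        ∧ bb k ∈ epsEnlX B (ε2 k) (vb k)
        ∧ γ * ‖ab k + bb k‖ = ‖ub k - vb k‖
        ∧ ‖ub k - vb k‖ ≤ 2 * ‖x 0 - xstar‖ / (k * θ)
        ∧ ε1 k + ε2 k
            ≤ 3 * (1 + 2 * (1 - θt / θ) ^ 2) * ‖x 0 - xstar‖ ^ 2 / (k * γ * θ) := by
  intro k hk ustar xstar hstar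
  have h := stmt18_general hβ hA.1 hB.1 hγ hθpos (by linarith) hpr ha hb hk hstar
  simp only [ergodicResidual, ergodicMean, ← hub, ← hvb, ← hab, ← hbb, ← hε1, ← hε2] at h
  exact ⟨h.1, h.2.1, h.2.2.1, h.2.2.2.1, h.2.2.2.2.trans
    (by gcongr; linarith [sq_nonneg (1 - θt / θ)])⟩
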